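/- For every n-qubit mixed state ρ and every Lagrangian subspace L ⊆ 𝔽₂^{2n}, the stabilizer fidelity satisfies F(ρ) ≥ 2^n · Σ_{x ∈ L} p̂_ρ(x). -/

import Mathlib

open scoped BigOperators ComplexOrder

/-- The phase space `𝔽₂^{2n}`, written as pairs `(a, b)` with `a, b ∈ 𝔽₂ⁿ`. -/
abbrev PhaseSpace (n : ℕ) := (Fin n → ZMod 2) × (Fin n → ZMod 2)

/-- The symplectic product `[x, y] = a·d + b·c` for `x = (a,b)`, `y = (c,d)`. -/
def sympl {n : ℕ} (x y : PhaseSpace n) : ZMod 2 :=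
  ∑ i, x.1 i * y.2 i + ∑ i, x.2 i * y.1 i

/-- The symplectic Fourier transform `f̂(a) = 4^{-n} ∑_x (-1)^{[a,x]} f(x)`. -/
noncomputable def sft {n : ℕ} (f : PhaseSpace n → ℝ) (a : PhaseSpace n) : ℝ :=
  (1 / 4 ^ n) * ∑ x, (-1 : ℝ) ^ (sympl a x).val * f x

/-- The symplectic complement of a set `S ⊆ 𝔽₂^{2n}`. -/
def symplComplement {n : ℕ} (S : Set (PhaseSpace n)) : Set (PhaseSpace n) :=
  {x | ∀ a ∈ S, sympl x a = 0}

/-- The Weyl operator `W_x = i^{a·b} X^a Z^b` for `x = (a,b)`, as a `2^n × 2^n` matrix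
indexed by `𝔽₂ⁿ`: `(W_x)_{k,j} = i^{a·b} (-1)^{b·j} [k = j + a]`. -/
noncomputable def Weyl {n : ℕ} (x : PhaseSpace n) :
    Matrix (Fin n → ZMod 2) (Fin n → ZMod 2) ℂ :=
  fun k j => Complex.I ^ (∑ i, (x.1 i).val * (x.2 i).val) *
    (if k = j + x.1 then (-1 : ℂ) ^ (∑ i, (x.2 i).val * (j i).val) else 0)

/-- `p_H(x) = 2^{-n} tr(W_x H)²` (the trace is real for Hermitian `H`). -/
noncomputable def pFun {n : ℕ} (H : Matrix (Fin n → ZMod 2) (Fin n → ZMod 2) ℂ)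
    (x : PhaseSpace n) : ℝ :=
  ((Weyl x * H).trace.re) ^ 2 / 2 ^ n

/-- A set is Lagrangian if it equals its symplectic complement. -/
def IsLagrangian {n : ℕ} (S : Set (PhaseSpace n)) : Prop :=
  S = symplComplement S

/-- The outer product `|φ⟩⟨φ|` of a vector `φ ∈ ℂ^{2^n}`. -/
noncomputable def outer {n : ℕ} (φ : (Fin n → ZMod 2) → ℂ) :
    Matrix (Fin n → ZMod 2) (Fin n → ZMod 2) ℂ :=
  Matrix.vecMulVec φ (fun j => starRingEnd ℂ (φ j))

/-- `Weyl(σ) = {x : tr(W_x σ) = ±1}`. -/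
def weylSet {n : ℕ} (σ : Matrix (Fin n → ZMod 2) (Fin n → ZMod 2) ℂ) :
    Set (PhaseSpace n) :=
  {x | (Weyl x * σ).trace = 1 ∨ (Weyl x * σ).trace = -1}

/-- A unit vector `φ` is a stabilizer state iff `Weyl(|φ⟩⟨φ|)` is Lagrangian. -/
def IsStabilizerState {n : ℕ} (φ : (Fin n → ZMod 2) → ℂ) : Prop :=
  (∑ j, Complex.normSq (φ j)) = 1 ∧ IsLagrangian (weylSet (outer φ))

/-- The stabilizer fidelity `F(ρ) = max_{stabilizer |φ⟩} ⟨φ|ρ|φ⟩ = max tr(ρ|φ⟩⟨φ|)`. -/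
noncomputable def stabFidelity {n : ℕ}
    (ρ : Matrix (Fin n → ZMod 2) (Fin n → ZMod 2) ℂ) : ℝ :=
  ⨆ φ : {φ : (Fin n → ZMod 2) → ℂ // IsStabilizerState φ}, ((ρ * outer φ.1).trace).re

/-- sign character -/
noncomputable def chi (z : ZMod 2) : ℝ := (-1 : ℝ) ^ z.val

lemma chi_add (a b : ZMod 2) : chi (a + b) = chi a * chi b := by
  have h0 : chi 0 = 1 := by simp [chi]
  have h1 : chi 1 = -1 := by
    have : (1 : ZMod 2).val = 1 := rfl
    simp [chi, this]
  have h2 : (1 : ZMod 2) + 1 = 0 := by decide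
  have hc : ∀ a : ZMod 2, a = 0 ∨ a = 1 := by decide
  rcases hc a with rfl | rfl <;> rcases hc b with rfl | rfl <;> simp [h0, h1, h2]

lemma chi_zero : chi 0 = 1 := by simp [chi]

lemma chi_one : chi 1 = -1 := by
  have : (1 : ZMod 2).val = 1 := rfl
  simp [chi, this]

lemma zmod2_cases (a : ZMod 2) : a = 0 ∨ a = 1 := by
  revert a; decide

lemma zmod2_add_self (a : ZMod 2) : a + a = 0 := by
  revert a; decide

lemma chi_mul_self (a : ZMod 2) : chi a * chi a = 1 := by
  rw [← chi_add, zmod2_add_self, chi_zero]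

lemma negOne_pow_eq (N : ℕ) : (-1 : ℂ) ^ N = (chi (N : ZMod 2) : ℂ) := by
  rw [neg_one_pow_eq_pow_mod_two]
  simp [chi, ZMod.val_natCast]

/-- dot product over F2 -/
def dt {n : ℕ} (a b : Fin n → ZMod 2) : ZMod 2 := ∑ i, a i * b i

lemma dt_add {n : ℕ} (a b c : Fin n → ZMod 2) : dt a (b + c) = dt a b + dt a c := by
  simp [dt, mul_add, Finset.sum_add_distrib]

lemma add_dt {n : ℕ} (a b c : Fin n → ZMod 2) : dt (a + b) c = dt a c + dt b c := by
  simp [dt, add_mul, Finset.sum_add_distrib]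

lemma dt_comm {n : ℕ} (a b : Fin n → ZMod 2) : dt a b = dt b a := by
  simp [dt, mul_comm]

lemma vadd_self {n : ℕ} (a : Fin n → ZMod 2) : a + a = 0 := by
  ext i; simp [zmod2_add_self]

lemma psadd_self {n : ℕ} (a : PhaseSpace n) : a + a = 0 := by
  ext i <;> simp [zmod2_add_self]

lemma sympl_eq {n : ℕ} (x y : PhaseSpace n) : sympl x y = dt x.1 y.2 + dt x.2 y.1 := rfl

lemma sympl_add_left {n : ℕ} (x y z : PhaseSpace n) :
    sympl (x + y) z = sympl x z + sympl y z := by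
  simp only [sympl_eq, Prod.fst_add, Prod.snd_add, add_dt]; ring

lemma sympl_comm {n : ℕ} (x y : PhaseSpace n) : sympl x y = sympl y x := by
  simp only [sympl_eq]; rw [dt_comm, dt_comm x.2, add_comm]

lemma sympl_add_right {n : ℕ} (x y z : PhaseSpace n) :
    sympl x (y + z) = sympl x y + sympl x z := by
  rw [sympl_comm, sympl_add_left, sympl_comm y, sympl_comm z]

lemma sum_chi_zero {G : Type*} [AddCommGroup G] [DecidableEq G] (S : Finset G) (f : G → ZMod 2) (x0 : G)
    (h0 : x0 + x0 = 0) (hS : ∀ x ∈ S, x + x0 ∈ S) (hf : ∀ x, f (x + x0) = f x + 1) :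
    ∑ x ∈ S, chi (f x) = 0 := by
  refine Finset.sum_involution (fun x _ => x + x0) ?_ ?_ hS ?_
  · intro x _
    simp only [hf, chi_add, chi_one]; ring
  · intro x _ _ h
    have := hf x
    rw [h] at this
    simp at this
  · intro x _
    rw [add_assoc, h0, add_zero]

lemma exists_dt {n : ℕ} (z : Fin n → ZMod 2) (hz : z ≠ 0) : ∃ b, dt b z = 1 := by
  obtain ⟨i, hi⟩ := Function.ne_iff.mp hz
  refine ⟨Pi.single i 1, ?_⟩
  simp only [dt, Pi.single_apply, ite_mul, one_mul, zero_mul, Finset.sum_ite_eq', Finset.mem_univ, if_true]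
  rcases zmod2_cases (z i) with h | h
  · exact absurd h hi
  · exact h

lemma zero_dt {n : ℕ} (z : Fin n → ZMod 2) : dt 0 z = 0 := by simp [dt]

lemma dt_zero {n : ℕ} (z : Fin n → ZMod 2) : dt z 0 = 0 := by simp [dt]

lemma sum_chi_dt {n : ℕ} (z : Fin n → ZMod 2) :
    ∑ b, chi (dt b z) = if z = 0 then 2 ^ n else 0 := by
  split_ifs with h
  · subst h; simp [dt_zero, chi_zero]
  · obtain ⟨b, hb⟩ := exists_dt z h
    exact sum_chi_zero _ (fun b => dt b z) b (vadd_self b) (by simp) (by simp [add_dt, hb])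

lemma sum_chi_sympl {n : ℕ} (z : PhaseSpace n) :
    ∑ v, chi (sympl z v) = if z = 0 then 4 ^ n else 0 := by
  split_ifs with h
  · subst h
    simp [sympl_eq, zero_dt, chi_zero]
    rw [← mul_pow]; norm_num
  · have : ∃ v, sympl z v = 1 := by
      by_cases h1 : z.1 = 0
      · have h2 : z.2 ≠ 0 := fun h2 => h (Prod.ext h1 h2)
        obtain ⟨b, hb⟩ := exists_dt z.2 h2
        exact ⟨(b, 0), by simp [sympl_eq, dt_zero, dt_comm z.2, hb]⟩
      · obtain ⟨b, hb⟩ := exists_dt z.1 h1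
        exact ⟨(0, b), by simp [sympl_eq, dt_zero, dt_comm z.1, hb]⟩
    obtain ⟨b, hb⟩ := this
    exact sum_chi_zero _ (fun b => sympl z b) b (psadd_self b) (by simp) (by simp [sympl_add_right, hb])

/-- phase exponent -/
def ph {n : ℕ} (x : PhaseSpace n) : ℕ := ∑ i, (x.1 i).val * (x.2 i).val

lemma ph_cast {n : ℕ} (x : PhaseSpace n) : ((ph x : ℕ) : ZMod 2) = dt x.1 x.2 := by
  simp [ph, dt]

lemma Weyl_apply {n : ℕ} (x : PhaseSpace n) (k j : Fin n → ZMod 2) :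
    Weyl x k j = Complex.I ^ (ph x) * (if k = j + x.1 then (chi (dt x.2 j) : ℂ) else 0) := by
  simp only [Weyl, negOne_pow_eq, ph]
  simp [dt]

lemma I_pow_sq {n : ℕ} (x : PhaseSpace n) :
    Complex.I ^ (ph x) * Complex.I ^ (ph x) = (chi (dt x.1 x.2) : ℂ) := by
  rw [← mul_pow, Complex.I_mul_I, negOne_pow_eq, ph_cast]

lemma Weyl_mul_apply {n : ℕ} (x y : PhaseSpace n) (k j : Fin n → ZMod 2) :
    (Weyl x * Weyl y) k j = Complex.I ^ (ph x) * Complex.I ^ (ph y) *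
      (if k = j + y.1 + x.1 then (chi (dt x.2 (j + y.1)) * chi (dt y.2 j) : ℂ) else 0) := by
  rw [Matrix.mul_apply, Finset.sum_eq_single (j + y.1)]
  · simp only [Weyl_apply]
    rw [if_pos trivial]
    by_cases h : k = j + y.1 + x.1
    · rw [if_pos h, if_pos h]; ring
    · rw [if_neg h, if_neg h]; ring
  · intro m _ hm
    simp [Weyl_apply, hm]
  · simp

lemma Weyl_comm {n : ℕ} (x y : PhaseSpace n) :
    Weyl x * Weyl y = (chi (sympl x y) : ℂ) • (Weyl y * Weyl x) := by
  ext k j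
  rw [Matrix.smul_apply, Weyl_mul_apply, Weyl_mul_apply, add_right_comm]
  split_ifs
  · have h1 := chi_mul_self (dt y.2 x.1)
    have h1' : (chi (dt y.2 x.1) : ℂ) * chi (dt y.2 x.1) = 1 := by exact_mod_cast h1
    simp only [sympl_eq, dt_add, chi_add, smul_eq_mul, dt_comm x.1 y.2]
    push_cast
    linear_combination (-Complex.I ^ ph x * Complex.I ^ ph y * (chi (dt x.2 j)) * chi (dt x.2 y.1) * chi (dt y.2 j)) * h1'
  · simp

lemma Weyl_sq {n : ℕ} (x : PhaseSpace n) : Weyl x * Weyl x = 1 := by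
  ext k j
  rw [Weyl_mul_apply, I_pow_sq, add_assoc, vadd_self, add_zero, Matrix.one_apply]
  split_ifs
  · have : chi (dt x.1 x.2) * (chi (dt x.2 (j + x.1)) * chi (dt x.2 j)) = 1 := by
      rw [← chi_add, ← chi_add, dt_add, dt_comm x.1]
      have : dt x.2 x.1 + (dt x.2 j + dt x.2 x.1 + dt x.2 j) = 
        (dt x.2 x.1 + dt x.2 x.1) + (dt x.2 j + dt x.2 j) := by ring
      rw [this, zmod2_add_self, zmod2_add_self, add_zero, chi_zero]
    exact_mod_cast this
  · simp

lemma Weyl_herm {n : ℕ} (x : PhaseSpace n) : (Weyl x).conjTranspose = Weyl x := by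
  ext k j
  rw [Matrix.conjTranspose_apply, Weyl_apply, Weyl_apply]
  have hiff : j = k + x.1 ↔ k = j + x.1 := by
    constructor <;> (intro h; rw [h, add_assoc, vadd_self, add_zero])
  have hI : star (Complex.I ^ ph x) = (chi (dt x.1 x.2) : ℂ) * Complex.I ^ ph x := by
    rw [← ph_cast, ← negOne_pow_eq, ← mul_pow]; simp
  by_cases h : k = j + x.1
  · rw [if_pos h, if_pos (hiff.2 h), star_mul', hI]
    have h1' : (chi (dt x.2 x.1) : ℂ) * chi (dt x.2 x.1) = 1 := by
      exact_mod_cast chi_mul_self _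
    rw [h, dt_add, chi_add, dt_comm x.1]
    simp
    linear_combination (Complex.I ^ ph x * chi (dt x.2 j)) * h1'
  · rw [if_neg h, if_neg (fun h' => h (hiff.1 h'))]; simp

lemma Weyl_zero {n : ℕ} : Weyl (0 : PhaseSpace n) = 1 := by
  ext k j
  simp [Weyl_apply, ph, zero_dt, chi_zero, Matrix.one_apply]

lemma Weyl_complete {n : ℕ} (k j l m : Fin n → ZMod 2) :
    ∑ x : PhaseSpace n, Weyl x k j * Weyl x l m = if k = m ∧ j = l then 2 ^ n else 0 := by
  have key : ∀ a : Fin n → ZMod 2, ∑ b, Weyl (a, b) k j * Weyl (a, b) l m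
      = if k = j + a ∧ l = m + a then (if a + j + m = 0 then 2 ^ n else 0) else 0 := by
    intro a
    by_cases h : k = j + a ∧ l = m + a
    · rw [if_pos h]
      have := sum_chi_dt (a + j + m)
      have h2 : ((∑ b, chi (dt b (a + j + m)) : ℝ) : ℂ) = if a + j + m = 0 then 2 ^ n else 0 := by
        rw [this]; split_ifs <;> simp
      rw [← h2, Complex.ofReal_sum]
      refine Finset.sum_congr rfl fun b _ => ?_
      simp only [Weyl_apply, if_pos h.1, if_pos h.2, dt_add, chi_add]
      have h3 := I_pow_sq (a, b)
      simp only [dt_comm a b] at h3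
      push_cast
      linear_combination (chi (dt b j) * chi (dt b m) : ℂ) * h3
    · rw [if_neg h]
      refine Finset.sum_eq_zero fun b _ => ?_
      simp only [Weyl_apply]
      by_cases h1 : k = j + a
      · rw [if_neg (fun h2 => h ⟨h1, h2⟩)]; simp
      · rw [if_neg h1]; simp
  rw [Fintype.sum_prod_type]
  simp only [key]
  have hz : ∀ a : Fin n → ZMod 2, a + j + m = 0 ↔ a = j + m := by
    intro a
    constructor
    · intro h
      have : a = (a + j + m) + (j + m) := by
        rw [add_assoc a, add_assoc a, vadd_self, add_zero]
      rw [this, h, zero_add]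
    · rintro rfl; rw [add_assoc, vadd_self]
  rw [Finset.sum_eq_single (j + m)]
  · have h1 : j + (j + m) = m := by rw [← add_assoc, vadd_self, zero_add]
    have h2 : m + (j + m) = j := by rw [add_comm j, ← add_assoc, vadd_self, zero_add]
    rw [h1, h2, if_pos ((hz _).2 rfl)]
    simp only [eq_comm]
  · intro a _ ha
    rw [if_neg (fun h => ha ((hz _).1 h))]; simp
  · simp

lemma parseval {n : ℕ} (A B : Matrix (Fin n → ZMod 2) (Fin n → ZMod 2) ℂ) :
    ∑ x : PhaseSpace n, (Weyl x * A).trace * (Weyl x * B).trace = 2 ^ n * (A * B).trace := by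
  have h : ∀ x : PhaseSpace n, (Weyl x * A).trace * (Weyl x * B).trace
      = ∑ k, ∑ j, ∑ l, ∑ m, (Weyl x k j * Weyl x l m) * (A j k * B m l) := by
    intro x
    simp only [Matrix.trace, Matrix.diag_apply, Matrix.mul_apply]
    rw [Finset.sum_mul]
    refine Finset.sum_congr rfl fun k _ => ?_
    rw [Finset.sum_mul]
    refine Finset.sum_congr rfl fun j _ => ?_
    rw [Finset.mul_sum]
    refine Finset.sum_congr rfl fun l _ => ?_
    rw [Finset.mul_sum]
    refine Finset.sum_congr rfl fun m _ => by ring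
  simp only [h]
  rw [Finset.sum_comm]
  have h2 : ∀ k : Fin n → ZMod 2, ∑ x : PhaseSpace n, ∑ j, ∑ l, ∑ m, (Weyl x k j * Weyl x l m) * (A j k * B m l)
      = 2 ^ n * ∑ j, A j k * B k j := by
    intro k
    rw [Finset.sum_comm, Finset.mul_sum]
    refine Finset.sum_congr rfl fun j _ => ?_
    rw [Finset.sum_comm, Finset.sum_eq_single j, Finset.sum_comm, Finset.sum_eq_single k]
    · rw [← Finset.sum_mul, Weyl_complete]; simp
    · intro m _ hm
      rw [← Finset.sum_mul, Weyl_complete, if_neg (fun h => hm h.1.symm), zero_mul]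
    · simp
    · intro l _ hl
      rw [Finset.sum_comm]
      refine Finset.sum_eq_zero fun m _ => ?_
      rw [← Finset.sum_mul, Weyl_complete, if_neg (fun h => hl h.2.symm), zero_mul]
    · simp
  simp only [h2, ← Finset.mul_sum]
  congr 1
  rw [Finset.sum_comm]
  simp [Matrix.trace, Matrix.mul_apply]

open Matrix

lemma trace_outer {n : ℕ} (A : Matrix (Fin n → ZMod 2) (Fin n → ZMod 2) ℂ)
    (φ : (Fin n → ZMod 2) → ℂ) : (A * outer φ).trace = star φ ⬝ᵥ (A *ᵥ φ) := by
  simp only [outer, Matrix.mul_vecMulVec, Matrix.trace_vecMulVec]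
  rw [dotProduct_comm]; rfl

lemma star_dot_weyl {n : ℕ} (x : PhaseSpace n) (φ ψ : (Fin n → ZMod 2) → ℂ) :
    star (Weyl x *ᵥ φ) ⬝ᵥ ψ = star φ ⬝ᵥ (Weyl x *ᵥ ψ) := by
  rw [star_mulVec, Weyl_herm, ← dotProduct_mulVec]

lemma exists_joint {n : ℕ} (S : Finset (PhaseSpace n)) (hS : ∀ x ∈ S, ∀ y ∈ S, sympl x y = 0) :
    ∃ φ : (Fin n → ZMod 2) → ℂ, φ ≠ 0 ∧ ∀ x ∈ S, Weyl x *ᵥ φ = φ ∨ Weyl x *ᵥ φ = -φ := by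
  classical
  induction S using Finset.induction_on with
  | empty => exact ⟨1, by intro h; simpa using congrFun h 0, by simp⟩
  | insert x S hx ih =>
    obtain ⟨φ, h0, hφ⟩ := ih (fun a ha b hb => hS a (by simp [ha]) b (by simp [hb]))
    have hsq : Weyl x *ᵥ (Weyl x *ᵥ φ) = φ := by rw [mulVec_mulVec, Weyl_sq, one_mulVec]
    have hc : ∀ y ∈ S, Weyl y *ᵥ (Weyl x *ᵥ φ) = Weyl x *ᵥ (Weyl y *ᵥ φ) := by
      intro y hy
      rw [mulVec_mulVec, mulVec_mulVec, Weyl_comm, hS y (by simp [hy]) x (by simp), chi_zero]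
      simp
    by_cases h : φ + Weyl x *ᵥ φ = 0
    · refine ⟨φ, h0, ?_⟩
      intro y hy
      rcases Finset.mem_insert.1 hy with rfl | hy
      · right; exact (neg_eq_of_add_eq_zero_right h).symm
      · exact hφ y hy
    · refine ⟨_, h, ?_⟩
      intro y hy
      rcases Finset.mem_insert.1 hy with rfl | hy
      · left; rw [mulVec_add, hsq, add_comm]
      · rw [mulVec_add, hc y hy]
        rcases hφ y hy with h | h
        · left; rw [h]
        · right; rw [h, mulVec_neg]; abel

lemma normSq_eq {n : ℕ} (φ : (Fin n → ZMod 2) → ℂ) :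
    star φ ⬝ᵥ φ = ((∑ j, Complex.normSq (φ j) : ℝ) : ℂ) := by
  simp [dotProduct, Complex.normSq_eq_conj_mul_self]

lemma exists_joint_unit {n : ℕ} (S : Finset (PhaseSpace n))
    (hS : ∀ x ∈ S, ∀ y ∈ S, sympl x y = 0) :
    ∃ φ : (Fin n → ZMod 2) → ℂ, star φ ⬝ᵥ φ = 1 ∧
      ∀ x ∈ S, Weyl x *ᵥ φ = φ ∨ Weyl x *ᵥ φ = -φ := by
  obtain ⟨φ, h0, hφ⟩ := exists_joint S hS
  set N : ℝ := ∑ j, Complex.normSq (φ j) with hN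
  have hpos : 0 < N := by
    obtain ⟨i, hi⟩ := Function.ne_iff.mp h0
    exact Finset.sum_pos' (fun _ _ => Complex.normSq_nonneg _)
      ⟨i, Finset.mem_univ _, Complex.normSq_pos.2 hi⟩
  refine ⟨(((Real.sqrt N)⁻¹ : ℝ) : ℂ) • φ, ?_, ?_⟩
  · rw [star_smul, smul_dotProduct, dotProduct_smul, normSq_eq, ← hN]
    simp only [smul_eq_mul, Complex.star_def, Complex.conj_ofReal]
    rw [← Complex.ofReal_mul, ← Complex.ofReal_mul]
    have : (√N)⁻¹ * ((√N)⁻¹ * N) = 1 := by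
      rw [← mul_assoc, ← mul_inv, Real.mul_self_sqrt hpos.le, inv_mul_cancel₀ hpos.ne']
    rw [this]; simp
  · intro x hx
    rw [mulVec_smul]
    rcases hφ x hx with h | h
    · left; rw [h]
    · right; rw [h, smul_neg]

lemma stab_trace_off {n : ℕ} {L : Set (PhaseSpace n)} (hLag : IsLagrangian L)
    (φ : (Fin n → ZMod 2) → ℂ)
    (hφ : ∀ x ∈ L, Weyl x *ᵥ φ = φ ∨ Weyl x *ᵥ φ = -φ) (x : PhaseSpace n) (hx : x ∉ L) :
    (Weyl x * outer φ).trace = 0 := by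
  have : ∃ y ∈ L, sympl x y ≠ 0 := by
    by_contra! h
    exact hx (by rw [hLag]; exact h)
  obtain ⟨y, hy, hxy⟩ := this
  have h1 : sympl x y = 1 := (zmod2_cases _).resolve_left hxy
  rw [trace_outer]
  have h2 : star (Weyl y *ᵥ φ) ⬝ᵥ (Weyl x *ᵥ (Weyl y *ᵥ φ)) = star φ ⬝ᵥ (Weyl x *ᵥ φ) := by
    rcases hφ y hy with h | h <;> simp [h, mulVec_neg]
  rw [star_dot_weyl, mulVec_mulVec (Weyl y *ᵥ φ |> fun _ => φ), Weyl_comm, h1, chi_one, smul_mulVec, mulVec_smul,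
    mulVec_mulVec, ← mul_assoc, Weyl_sq, one_mul] at h2
  simp only [dotProduct_smul, smul_eq_mul] at h2
  push_cast at h2
  linear_combination (-1/2 : ℂ) * h2

lemma stab_of_joint {n : ℕ} {L : Set (PhaseSpace n)} (hLag : IsLagrangian L)
    (φ : (Fin n → ZMod 2) → ℂ) (h1 : star φ ⬝ᵥ φ = 1)
    (hφ : ∀ x ∈ L, Weyl x *ᵥ φ = φ ∨ Weyl x *ᵥ φ = -φ) : IsStabilizerState φ := by
  refine ⟨?_, ?_⟩
  · rw [normSq_eq] at h1; exact_mod_cast h1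
  · have : weylSet (outer φ) = L := by
      ext x
      constructor
      · intro hx
        by_contra hn
        have := stab_trace_off hLag φ hφ x hn
        simp [weylSet, this] at hx
      · intro hx
        simp only [weylSet, Set.mem_ofPred_eq, trace_outer]
        rcases hφ x hx with h | h
        · left; rw [h, h1]
        · right; rw [h, dotProduct_neg, h1]
    rw [this]; exact hLag

lemma trace_le {n : ℕ} (ρ : Matrix (Fin n → ZMod 2) (Fin n → ZMod 2) ℂ) (φ : (Fin n → ZMod 2) → ℂ)
    (h : (∑ j, Complex.normSq (φ j)) = 1) :
    ((ρ * outer φ).trace).re ≤ ∑ i, ∑ j, ‖ρ i j‖ := by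
  have hle : ∀ i, ‖φ i‖ ≤ 1 := by
    intro i
    have := Finset.single_le_sum (f := fun j => Complex.normSq (φ j))
      (fun j _ => Complex.normSq_nonneg _) (Finset.mem_univ i)
    rw [h] at this
    simp only [Complex.normSq_eq_norm_sq] at this
    nlinarith [norm_nonneg (φ i)]
  refine (Complex.re_le_norm _).trans ?_
  simp only [Matrix.trace, Matrix.diag_apply, Matrix.mul_apply]
  refine (norm_sum_le _ _).trans (Finset.sum_le_sum fun i _ => (norm_sum_le _ _).trans
    (Finset.sum_le_sum fun j _ => ?_))
  simp only [outer, vecMulVec_apply, norm_mul, RCLike.norm_conj]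
  have := mul_le_one₀ (hle j) (norm_nonneg _) (hle i)
  nlinarith [norm_nonneg (ρ i j)]

lemma le_stab {n : ℕ} (ρ : Matrix (Fin n → ZMod 2) (Fin n → ZMod 2) ℂ) (φ : (Fin n → ZMod 2) → ℂ)
    (h : IsStabilizerState φ) : ((ρ * outer φ).trace).re ≤ stabFidelity ρ := by
  unfold stabFidelity
  refine le_ciSup (f := fun φ : {φ : (Fin n → ZMod 2) → ℂ // IsStabilizerState φ} =>
    ((ρ * outer φ.1).trace).re) ?_ ⟨φ, h⟩
  refine ⟨∑ i, ∑ j, ‖ρ i j‖, ?_⟩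
  rintro _ ⟨ψ, rfl⟩
  exact trace_le ρ ψ.1 ψ.2.1

lemma trace_real {n : ℕ} (ρ : Matrix (Fin n → ZMod 2) (Fin n → ZMod 2) ℂ) (h : ρ.IsHermitian)
    (x : PhaseSpace n) : (Weyl x * ρ).trace = (((Weyl x * ρ).trace.re : ℝ) : ℂ) := by
  have : star (Weyl x * ρ).trace = (Weyl x * ρ).trace := by
    rw [← trace_conjTranspose, conjTranspose_mul, Weyl_herm, h.eq, trace_mul_comm]
  exact (Complex.conj_eq_iff_re.1 this).symm

open Classical in
lemma lag_sum {n : ℕ} {L : Set (PhaseSpace n)} (hLag : IsLagrangian L) (y : PhaseSpace n) :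
    ∑ x ∈ L.toFinset, chi (sympl x y) = if y ∈ L then (L.toFinset.card : ℝ) else 0 := by
  split_ifs with h
  · rw [Finset.sum_congr rfl (g := fun _ => (1 : ℝ))]
    · simp
    · intro x hx
      rw [Set.mem_toFinset, hLag] at hx
      rw [hx y h, chi_zero]
  · have : ∃ x ∈ L, sympl y x ≠ 0 := by
      by_contra! h'
      exact h (by rw [hLag]; exact h')
    obtain ⟨x, hx, hxy⟩ := this
    have h1 : sympl y x = 1 := (zmod2_cases _).resolve_left hxy
    refine sum_chi_zero _ (fun x => sympl x y) x (psadd_self x) ?_ ?_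
    · intro z hz
      rw [Set.mem_toFinset] at hz ⊢
      rw [hLag] at hx hz ⊢
      intro a ha
      rw [sympl_add_left, hx a ha, hz a ha, add_zero]
    · intro z
      rw [sympl_add_left, sympl_comm x, h1]

lemma zero_mem_lag {n : ℕ} {L : Set (PhaseSpace n)} (hLag : IsLagrangian L) : (0 : PhaseSpace n) ∈ L := by
  rw [hLag]; intro a _; simp [sympl_eq, zero_dt]

open Classical in
lemma lag_card {n : ℕ} {L : Set (PhaseSpace n)} (hLag : IsLagrangian L) :
    (L.toFinset.card : ℝ) = 2 ^ n := by
  have h1 : ∑ y, ∑ x ∈ L.toFinset, chi (sympl x y) = (L.toFinset.card : ℝ) * L.toFinset.card := by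
    simp only [lag_sum hLag]
    rw [← Finset.sum_filter]
    simp only [Finset.sum_const, nsmul_eq_mul]
    congr 3
    ext; simp
  rw [Finset.sum_comm] at h1
  simp only [sum_chi_sympl] at h1
  rw [Finset.sum_ite_eq', if_pos (by simpa using zero_mem_lag hLag)] at h1
  have h2 : (4 : ℝ) ^ n = 2 ^ n * 2 ^ n := by rw [← mul_pow]; norm_num
  rw [h2] at h1
  nlinarith [mul_self_eq_mul_self_iff.1 h1, pow_pos (two_pos : (0:ℝ) < 2) n, Nat.cast_nonneg (α := ℝ) L.toFinset.card]

open Classical in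
lemma rhs_eq {n : ℕ} {L : Set (PhaseSpace n)} (hLag : IsLagrangian L) (t : PhaseSpace n → ℝ) :
    2 ^ n * ∑ x, L.indicator (sft (fun x => t x ^ 2 / 2 ^ n)) x
      = (∑ x ∈ L.toFinset, t x ^ 2) / 2 ^ n := by
  have h : ∑ x, L.indicator (sft (fun x => t x ^ 2 / 2 ^ n)) x
      = ∑ x ∈ L.toFinset, (1 / 4 ^ n) * ∑ y, chi (sympl x y) * (t y ^ 2 / 2 ^ n) := by
    simp only [Set.indicator_apply]
    rw [← Finset.sum_filter]
    refine Finset.sum_congr (by ext; simp) fun x _ => rfl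
  rw [h, ← Finset.mul_sum, Finset.sum_comm]
  simp only [← Finset.sum_mul, lag_sum hLag, lag_card hLag]
  simp only [ite_mul, zero_mul]
  rw [← Finset.sum_filter]
  have h2 : (Finset.univ.filter (· ∈ L)) = L.toFinset := by ext; simp
  have h4 : (4 : ℝ) ^ n = 2 ^ n * 2 ^ n := by rw [← mul_pow]; norm_num
  rw [h2, h4, Finset.sum_div, Finset.mul_sum, Finset.mul_sum]
  refine Finset.sum_congr rfl fun x _ => ?_
  field_simp

theorem stabFidelity_ge_sum_sft_pFun {n : ℕ}
    (ρ : Matrix (Fin n → ZMod 2) (Fin n → ZMod 2) ℂ)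
    (hρ : ρ.PosSemidef) (hτ : ρ.trace = 1)
    (L : Set (PhaseSpace n)) (hLag : IsLagrangian L) :
    stabFidelity ρ ≥ 2 ^ n * ∑ x, L.indicator (sft (pFun ρ)) x := by
  classical
  set t : PhaseSpace n → ℝ := fun x => (Weyl x * ρ).trace.re with ht
  have hp : pFun ρ = fun x => t x ^ 2 / 2 ^ n := rfl
  rw [hp, rhs_eq hLag]
  obtain ⟨φ, h1, hφ⟩ := exists_joint_unit L.toFinset (by
    intro x hx y hy
    rw [Set.mem_toFinset] at hx hy
    rw [hLag] at hx
    exact hx y hy)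
  simp only [Set.mem_toFinset] at hφ
  have hs : ∀ x, ∃ s : ℝ, s * s = 1 ∧ (x ∈ L → Weyl x *ᵥ φ = (s : ℂ) • φ) := by
    intro x
    by_cases hx : x ∈ L
    · rcases hφ x hx with h | h
      · exact ⟨1, by simp, fun _ => by simp [h]⟩
      · exact ⟨-1, by simp, fun _ => by simp [h]⟩
    · exact ⟨1, by simp, fun h => absurd h hx⟩
  choose s hss hs using hs
  have heig : ∀ v, ∀ x ∈ L, Weyl x *ᵥ (Weyl v *ᵥ φ) = ((chi (sympl x v) * s x : ℝ) : ℂ) • (Weyl v *ᵥ φ) := by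
    intro v x hx
    rw [mulVec_mulVec, Weyl_comm, smul_mulVec, ← mulVec_mulVec, hs x hx, mulVec_smul, smul_smul]
    push_cast; rfl
  have hpm : ∀ v, ∀ x ∈ L, Weyl x *ᵥ (Weyl v *ᵥ φ) = Weyl v *ᵥ φ ∨ Weyl x *ᵥ (Weyl v *ᵥ φ) = -(Weyl v *ᵥ φ) := by
    intro v x hx
    have h2 : (chi (sympl x v) * s x) * (chi (sympl x v) * s x) = 1 := by
      rw [mul_mul_mul_comm, chi_mul_self, hss, one_mul]
    rw [heig v x hx]
    rcases mul_self_eq_one_iff.1 h2 with h | h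
    · left; simp [h]
    · right; simp [h]
  have hunit : ∀ v, star (Weyl v *ᵥ φ) ⬝ᵥ (Weyl v *ᵥ φ) = 1 := by
    intro v
    rw [star_dot_weyl, mulVec_mulVec, Weyl_sq, one_mulVec, h1]
  set q : PhaseSpace n → ℝ := fun v => ((ρ * outer (Weyl v *ᵥ φ)).trace).re with hq
  have hqle : ∀ v, q v ≤ stabFidelity ρ := fun v =>
    le_stab ρ _ (stab_of_joint hLag _ (hunit v) (hpm v))
  have hq0 : ∀ v, 0 ≤ q v := by
    intro v
    simp only [hq, trace_outer]
    exact (Complex.le_def.1 (hρ.dotProduct_mulVec_nonneg _)).1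
  have hqe : ∀ v, 2 ^ n * q v = ∑ x ∈ L.toFinset, t x * s x * chi (sympl x v) := by
    intro v
    have hpar := parseval ρ (outer (Weyl v *ᵥ φ))
    have hx : ∀ x : PhaseSpace n, (Weyl x * ρ).trace * (Weyl x * outer (Weyl v *ᵥ φ)).trace
        = if x ∈ L then ((t x * s x * chi (sympl x v) : ℝ) : ℂ) else 0 := by
      intro x
      split_ifs with hx
      · rw [trace_real ρ hρ.1, trace_outer, heig v x hx, dotProduct_smul, hunit]
        simp [ht]; ring
      · rw [stab_trace_off hLag _ (hpm v) x hx, mul_zero]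
    simp only [hx] at hpar
    rw [← Finset.sum_filter, ← Complex.ofReal_sum] at hpar
    have h2 : (Finset.univ.filter (· ∈ L)) = L.toFinset := by ext; simp
    rw [h2] at hpar
    have := congrArg Complex.re hpar
    rw [Complex.ofReal_re] at this
    rw [this, hq]
    have h3 : (2 : ℂ) ^ n = ((2 ^ n : ℝ) : ℂ) := by push_cast; rfl
    rw [h3, Complex.re_ofReal_mul]
  have h4 : (4 : ℝ) ^ n = 2 ^ n * 2 ^ n := by rw [← mul_pow]; norm_num
  have h2n : (0 : ℝ) < 2 ^ n := by positivity
  have hsum1 : ∑ v, q v = 2 ^ n := by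
    have : 2 ^ n * ∑ v, q v = 4 ^ n := by
      rw [Finset.mul_sum]
      simp only [hqe]
      rw [Finset.sum_comm]
      simp only [← Finset.mul_sum, sum_chi_sympl, mul_ite, mul_zero]
      rw [Finset.sum_ite_eq', if_pos (by simpa using zero_mem_lag hLag)]
      have hs0 : s 0 = 1 := by
        have h := hs 0 (zero_mem_lag hLag)
        rw [Weyl_zero, one_mulVec] at h
        have h' := congrArg (fun ψ => star φ ⬝ᵥ ψ) h
        simp only [dotProduct_smul, h1, smul_eq_mul, mul_one] at h'
        exact_mod_cast h'.symm
      have ht0 : t 0 = 1 := by simp [ht, Weyl_zero, hτ]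
      rw [hs0, ht0]; ring
    rw [h4] at this
    exact mul_left_cancel₀ h2n.ne' this
  have hsum2 : ∑ v, q v ^ 2 = ∑ x ∈ L.toFinset, t x ^ 2 := by
    have : 4 ^ n * ∑ v, q v ^ 2 = 4 ^ n * ∑ x ∈ L.toFinset, t x ^ 2 := by
      have e1 : ∀ v, 4 ^ n * q v ^ 2 = ∑ x ∈ L.toFinset, ∑ y ∈ L.toFinset,
          (t x * s x * (t y * s y)) * chi (sympl (x + y) v) := by
        intro v
        rw [h4, show (2:ℝ) ^ n * 2 ^ n * q v ^ 2 = (2 ^ n * q v) * (2 ^ n * q v) by ring, hqe,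
          Finset.sum_mul_sum]
        refine Finset.sum_congr rfl fun x _ => Finset.sum_congr rfl fun y _ => ?_
        rw [sympl_add_left, chi_add]; ring
      rw [Finset.mul_sum]
      simp only [e1]
      rw [Finset.sum_comm, Finset.mul_sum]
      refine Finset.sum_congr rfl fun x hx => ?_
      rw [Finset.sum_comm]
      simp only [← Finset.mul_sum, sum_chi_sympl]
      rw [Finset.sum_eq_single x]
      · rw [psadd_self, if_pos rfl]
        linear_combination (t x ^ 2 * 4 ^ n) * hss x
      · intro y _ hy
        rw [if_neg, mul_zero]
        intro h
        apply hy
        have : y = x + (x + y) := by rw [← add_assoc, psadd_self, zero_add]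
        rw [this, h, add_zero]
      · intro h; exact absurd hx h
    exact mul_left_cancel₀ (by positivity) this
  rw [ge_iff_le, div_le_iff₀ h2n, ← hsum2, ← hsum1, Finset.mul_sum]
  refine Finset.sum_le_sum fun v _ => ?_
  nlinarith [hqle v, hq0 v]
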